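/- Let K be a field with at least 13 elements and S a smooth cubic surface in P^3 over K. Let ℓ be a K-line contained in S, and let P ∈ ℓ(K) be a point that does not lie on any other line contained in S. Then ℓ(K) ⊆ Γ_P(K) ⊆ Span({P}). -/

import Mathlib

/- Common framework: points, lines, intersection divisors, the secant-tangent span,
the groups `H_S(K)`, geometric notions over the algebraic closure, and topologies. -/

open MvPolynomial

noncomputable section

namespace CubicSurf

variable {K L : Type*} [Field K] [Field L] {n : ℕ}

/-- The set of `K`-rational points of the projective hypersurface `F = 0`. -/
def zeroSet (F : MvPolynomial (Fin n) K) : Set (Projectivization K (Fin n → K)) :=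
  {P | eval P.rep F = 0}

/-- The binary form obtained by restricting `F` to the line spanned by `u` and `v`,
via the parametrization `(s : t) ↦ s • u + t • v`. -/
def lineRestrict (F : MvPolynomial (Fin n) K) (u v : Fin n → K) : MvPolynomial (Fin 2) K :=
  aeval (fun i => C (u i) * X 0 + C (v i) * X 1) F

/-- A projective line: a 2-dimensional linear subspace of `K^n`. -/
def IsLine (W : Submodule K (Fin n → K)) : Prop := Module.finrank K W = 2

/-- The line `W` lies (geometrically) on the hypersurface `F = 0`. -/
def LineOnSurf (F : MvPolynomial (Fin n) K) (W : Submodule K (Fin n → K)) : Prop :=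
  ∀ u v : Fin n → K, u ∈ W → v ∈ W → lineRestrict F u v = 0

/-- The projective point `P` lies on the line `W`. -/
def OnLine (W : Submodule K (Fin n → K)) (P : Projectivization K (Fin n → K)) : Prop :=
  P.rep ∈ W

/-- The set of `K`-points of the line `W`. -/
def linePts (W : Submodule K (Fin n → K)) : Set (Projectivization K (Fin n → K)) :=
  {P | OnLine W P}

/-- `ℓ · S = P + Q + R`: the intersection divisor (with multiplicities) of the line `W`
with the hypersurface `F = 0` is `P + Q + R`. -/
def MeetsIn (F : MvPolynomial (Fin n) K) (W : Submodule K (Fin n → K))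
    (P Q R : Projectivization K (Fin n → K)) : Prop :=
  ∃ (u v : Fin n → K) (_ : u ∈ W) (_ : v ∈ W) (_ : LinearIndependent K ![u, v])
    (c : K) (l m : Fin 3 → K) (h : ∀ k, l k • u + m k • v ≠ 0),
      c ≠ 0 ∧
      lineRestrict F u v = C c * ∏ k : Fin 3, (C (m k) * X 0 - C (l k) * X 1) ∧
      Projectivization.mk K _ (h 0) = P ∧
      Projectivization.mk K _ (h 1) = Q ∧
      Projectivization.mk K _ (h 2) = R

/-- Membership in the span of a set of points under the secant/tangent process:
the smallest subset of `S(K)` containing `B` such that whenever `P`, `Q` are in it and a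
`K`-line `ℓ ⊄ S` satisfies `ℓ·S = P+Q+R` with `R ∈ S(K)`, then `R` is in it. -/
inductive SpanMem (F : MvPolynomial (Fin n) K) (B : Set (Projectivization K (Fin n → K))) :
    Projectivization K (Fin n → K) → Prop
  | base (P : Projectivization K (Fin n → K)) (hP : P ∈ B) : SpanMem F B P
  | secant (P Q R : Projectivization K (Fin n → K)) (W : Submodule K (Fin n → K))
      (hW : IsLine W) (hWS : ¬ LineOnSurf F W) (hP : SpanMem F B P) (hQ : SpanMem F B Q)
      (hR : R ∈ zeroSet F) (hm : MeetsIn F W P Q R) : SpanMem F B R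

/-- The span of a set of points under the secant/tangent process. -/
def Span (F : MvPolynomial (Fin n) K) (B : Set (Projectivization K (Fin n → K))) :
    Set (Projectivization K (Fin n → K)) :=
  {P | SpanMem F B P}

/-- Smoothness of the projective hypersurface `F = 0`: over the algebraic closure there is
no nonzero common zero of `F` and all of its partial derivatives. -/
def IsSmoothHypersurf (F : MvPolynomial (Fin n) K) : Prop :=
  ∀ v : Fin n → AlgebraicClosure K,
    eval v (MvPolynomial.map (algebraMap K (AlgebraicClosure K)) F) = 0 →
    (∀ i, eval v (pderiv i (MvPolynomial.map (algebraMap K (AlgebraicClosure K)) F)) = 0) →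
    v = 0

/-- A smooth cubic hypersurface. -/
def SmoothCubic (F : MvPolynomial (Fin n) K) : Prop :=
  F.IsHomogeneous 3 ∧ IsSmoothHypersurf F

/-- The linear form cutting out the tangent plane `Π_P` of `F = 0` at `P`,
evaluated at the representative of a point `Q`; `Q ∈ Π_P` iff this vanishes. -/
def tangentEval (F : MvPolynomial (Fin n) K) (P Q : Projectivization K (Fin n → K)) : K :=
  ∑ i, eval P.rep (pderiv i F) * Q.rep i

/-- The set of `K`-points of the tangent plane `Π_P`. -/
def tangentPlanePts (F : MvPolynomial (Fin n) K) (P : Projectivization K (Fin n → K)) :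
    Set (Projectivization K (Fin n → K)) :=
  {Q | tangentEval F P Q = 0}

/-- The set of `K`-points of `Γ_P = S ∩ Π_P`. -/
def GammaPts (F : MvPolynomial (Fin n) K) (P : Projectivization K (Fin n → K)) :
    Set (Projectivization K (Fin n → K)) :=
  zeroSet F ∩ tangentPlanePts F P

/-! ### Base change along a field embedding -/

/-- Base change of a vector along a field embedding. -/
def clVec (φ : K →+* L) (v : Fin n → K) : Fin n → L := fun i => φ (v i)

lemma clVec_ne_zero (φ : K →+* L) {v : Fin n → K} (hv : v ≠ 0) : clVec φ v ≠ 0 := by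
  intro h
  apply hv
  funext i
  have := congrFun h i
  simpa [clVec] using φ.injective (by simpa [clVec] using this)

/-- Base change of a projective point along a field embedding. -/
def clPt (φ : K →+* L) (P : Projectivization K (Fin n → K)) :
    Projectivization L (Fin n → L) :=
  Projectivization.mk L (clVec φ P.rep) (clVec_ne_zero φ P.rep_nonzero)

lemma eval_smul_of_isHomogeneous {R : Type*} [CommSemiring R] {F : MvPolynomial (Fin n) R}
    {d : ℕ} (hF : F.IsHomogeneous d) (a : R) (w : Fin n → R) :
    eval (a • w) F = a ^ d * eval w F := by
  classical
  rw [eval_eq', eval_eq', Finset.mul_sum]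
  refine Finset.sum_congr rfl fun s hs => ?_
  have hdeg : ∑ i, s i = d := by
    have h1 := hF (MvPolynomial.mem_support_iff.mp hs)
    rw [Finsupp.weight_apply] at h1
    rw [← h1, Finsupp.sum_fintype]
    · simp
    · intro i; simp
  have key : ∀ i : Fin n, (a • w) i ^ s i = a ^ s i * w i ^ s i := by
    intro i; simp [mul_pow]
  rw [Finset.prod_congr rfl (fun i _ => key i), Finset.prod_mul_distrib,
    Finset.prod_pow_eq_pow_sum, hdeg]
  ring

lemma clVec_eval (φ : K →+* L) (F : MvPolynomial (Fin n) K) (v : Fin n → K) :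
    eval (clVec φ v) (MvPolynomial.map φ F) = φ (eval v F) := by
  rw [eval_map]
  have h : φ (eval v F) = φ (eval₂Hom (RingHom.id K) v F) := rfl
  rw [h, map_eval₂Hom]
  rfl

/-- A point given by a vector on which a homogeneous `F` vanishes lies in the zero set. -/
lemma mk_mem_zeroSet {F : MvPolynomial (Fin n) K} {d : ℕ} (hF : F.IsHomogeneous d)
    {v : Fin n → K} (hv : v ≠ 0) (h : eval v F = 0) :
    Projectivization.mk K v hv ∈ zeroSet F := by
  obtain ⟨a, ha⟩ := Projectivization.exists_smul_eq_mk_rep K v hv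
  show eval (Projectivization.mk K v hv).rep F = 0
  have hrep : (Projectivization.mk K v hv).rep = (a : K) • v := by
    rw [← ha, Units.smul_def]
  rw [hrep, eval_smul_of_isHomogeneous hF, h, mul_zero]

lemma clPt_mem_zeroSet (φ : K →+* L) {F : MvPolynomial (Fin n) K} {d : ℕ}
    (hF : F.IsHomogeneous d) {P : Projectivization K (Fin n → K)} (hP : P ∈ zeroSet F) :
    clPt φ P ∈ zeroSet (MvPolynomial.map φ F) := by
  apply mk_mem_zeroSet (hF.map φ)
  rw [clVec_eval, hP, map_zero]

/-- The induced map on points of `S` under base change of the field. -/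
def ptMap (φ : K →+* L) {F : MvPolynomial (Fin n) K} {d : ℕ} (hF : F.IsHomogeneous d)
    (P : zeroSet F) : zeroSet (MvPolynomial.map φ F) :=
  ⟨clPt φ P.1, clPt_mem_zeroSet φ hF P.2⟩

/-- A subspace of `L^n` is defined over `K` (w.r.t. `φ : K →+* L`) if it is spanned by
the base change of a `K`-subspace. -/
def DefinedOver (φ : K →+* L) (W : Submodule L (Fin n → L)) : Prop :=
  ∃ W₀ : Submodule K (Fin n → K), W = Submodule.span L (clVec φ '' (W₀ : Set (Fin n → K)))

/-! ### Asymptotic lines, parabolic points, Eckardt points -/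

/-- The line `W` is asymptotic to `F = 0` at `P`: the intersection multiplicity
`(ℓ · S)_P` is at least 3. -/
def AsymptoticAt (F : MvPolynomial (Fin n) K) (W : Submodule K (Fin n → K))
    (P : Projectivization K (Fin n → K)) : Prop :=
  IsLine W ∧ P.rep ∈ W ∧
    ∃ v ∈ W, LinearIndependent K ![P.rep, v] ∧
      ∃ c : K, lineRestrict F P.rep v = C c * (X 1) ^ 3

/-- The set of asymptotic lines at `P`. -/
def AsymSet (F : MvPolynomial (Fin n) K) (P : Projectivization K (Fin n → K)) :
    Set (Submodule K (Fin n → K)) :=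
  {W | AsymptoticAt F W P}

/-- A point of a hypersurface is parabolic (relative to the given field) if it does
not have exactly two distinct asymptotic lines (i.e. it has one or infinitely many). -/
def ParabolicAt (F : MvPolynomial (Fin n) K) (P : Projectivization K (Fin n → K)) : Prop :=
  ¬ ∃ W₁ W₂ : Submodule K (Fin n → K), W₁ ≠ W₂ ∧ AsymSet F P = {W₁, W₂}

/-- An Eckardt point (relative to the given field): three distinct lines lying on the
surface pass through `P`. -/
def EckardtAt (F : MvPolynomial (Fin n) K) (P : Projectivization K (Fin n → K)) : Prop :=
  ∃ W₁ W₂ W₃ : Submodule K (Fin n → K), W₁ ≠ W₂ ∧ W₁ ≠ W₃ ∧ W₂ ≠ W₃ ∧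
    (∀ W ∈ ({W₁, W₂, W₃} : Set (Submodule K (Fin n → K))),
      IsLine W ∧ LineOnSurf F W ∧ OnLine W P)

section geometric

variable (F : MvPolynomial (Fin n) K)

/-- `F` base changed to the algebraic closure of `K`. -/
def clF : MvPolynomial (Fin n) (AlgebraicClosure K) :=
  MvPolynomial.map (algebraMap K (AlgebraicClosure K)) F

/-- A `K`-point of `S` is parabolic (a geometric notion, checked over `K̄`). -/
def IsParabolic (P : Projectivization K (Fin n → K)) : Prop :=
  ParabolicAt (clF F) (clPt (algebraMap K (AlgebraicClosure K)) P)

/-- A `K`-point of `S` is an Eckardt point (a geometric notion, checked over `K̄`). -/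
def IsEckardt (P : Projectivization K (Fin n → K)) : Prop :=
  EckardtAt (clF F) (clPt (algebraMap K (AlgebraicClosure K)) P)

/-- A `K`-point of `S` is `K`-hyperbolic: it has exactly two asymptotic lines over `K̄`,
and both are defined over `K`. -/
def IsHyperbolic (P : Projectivization K (Fin n → K)) : Prop :=
  ∃ W₁ W₂, W₁ ≠ W₂ ∧
    AsymSet (clF F) (clPt (algebraMap K (AlgebraicClosure K)) P) = {W₁, W₂} ∧
    DefinedOver (algebraMap K (AlgebraicClosure K)) W₁ ∧
    DefinedOver (algebraMap K (AlgebraicClosure K)) W₂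

/-- A `K`-point of `S` is `K`-ternary: at least one of the asymptotic lines of `S`
through `P` is defined over `K`. -/
def IsTernary (P : Projectivization K (Fin n → K)) : Prop :=
  ∃ W ∈ AsymSet (clF F) (clPt (algebraMap K (AlgebraicClosure K)) P),
    DefinedOver (algebraMap K (AlgebraicClosure K)) W

end geometric

/-! ### The group `H_S(K)` -/

variable (F : MvPolynomial (Fin n) K)

/-- `G_S(K)`: the free abelian group on the set `S(K)`. -/
abbrev GS := FreeAbelianGroup (zeroSet F)

/-- The degree homomorphism `G_S(K) → ℤ`, `Σ aᵢ Pᵢ ↦ Σ aᵢ`. -/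
def degHom : GS F →+ ℤ := FreeAbelianGroup.lift fun _ => (1 : ℤ)

/-- `P + Q + R` is a "three point sum": either cut out on `S` with multiplicity by a
`K`-line not contained in `S`, or `P`, `Q`, `R` all lie on a `K`-line contained in `S`. -/
def TripleRel (P Q R : zeroSet F) : Prop :=
  ∃ W : Submodule K (Fin n → K), IsLine W ∧
    ((¬ LineOnSurf F W ∧ MeetsIn F W P.1 Q.1 R.1) ∨
      (LineOnSurf F W ∧ OnLine W P.1 ∧ OnLine W Q.1 ∧ OnLine W R.1))

/-- `G'_S(K)`: the subgroup generated by all three point sums. -/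
def Gp : AddSubgroup (GS F) :=
  AddSubgroup.closure {x | ∃ P Q R : zeroSet F, TripleRel F P Q R ∧
    x = FreeAbelianGroup.of P + FreeAbelianGroup.of Q + FreeAbelianGroup.of R}

/-- `G''_S(K)`: the degree-0 part of `G'_S(K)`. -/
def Gpp : AddSubgroup (GS F) := Gp F ⊓ (degHom F).ker

/-- `H_S(K) = G_S(K)/G''_S(K)`. -/
abbrev HS := GS F ⧸ Gpp F

/-- The class `[P] ∈ H_S(K)` of a point `P ∈ S(K)`. -/
def HClass (P : zeroSet F) : HS F := QuotientAddGroup.mk' (Gpp F) (FreeAbelianGroup.of P)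

/-- The degree homomorphism `H_S(K) → ℤ`. -/
def HdegHom : HS F →+ ℤ :=
  QuotientAddGroup.lift (Gpp F) (degHom F) (fun _ hx => hx.2)

/-- `H⁰_S(K)`: the degree-0 part of `H_S(K)`. -/
def H0 : AddSubgroup (HS F) := (HdegHom F).ker

@[simp] lemma HdegHom_HClass (P : zeroSet F) : HdegHom F (HClass F P) = 1 := by
  simp [HdegHom, HClass, degHom]

/-- The class `[P] - [Q]`, as an element of `H⁰_S(K)`. -/
def H0diff (P Q : zeroSet F) : H0 F :=
  ⟨HClass F P - HClass F Q, by simp [H0, AddMonoidHom.mem_ker, map_sub]⟩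

/-! ### mod-`p` dimensions and torsion -/

/-- `A/pA` for an abelian group `A`. -/
abbrev ModP (p : ℕ) (A : Type*) [AddCommGroup A] : Type _ :=
  A ⧸ (AddMonoidHom.range (nsmulAddMonoidHom p : A →+ A))

instance ModP.instModule (p : ℕ) (A : Type*) [AddCommGroup A] : Module (ZMod p) (ModP p A) :=
  QuotientAddGroup.zmodModule (fun x => ⟨x, rfl⟩)

/-- `dim_{F_p} A/pA`. -/
def dimModP (p : ℕ) (A : Type*) [AddCommGroup A] : Cardinal := Module.rank (ZMod p) (ModP p A)

/-- The `k`-torsion subgroup `A[k]` of an abelian group `A`. -/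
def torsion (k : ℕ) (A : Type*) [AddCommGroup A] : AddSubgroup A :=
  (nsmulAddMonoidHom k : A →+ A).ker

instance torsion.instModule (k : ℕ) (A : Type*) [AddCommGroup A] :
    Module (ZMod k) (torsion k A) :=
  AddCommGroup.zmodModule (fun x => Subtype.ext x.2)

/-- `dim_{F_k} A[k]`: the dimension of the `k`-torsion subgroup (for `k` prime). -/
def dimTorsion (k : ℕ) (A : Type*) [AddCommGroup A] : Cardinal :=
  Module.rank (ZMod k) (torsion k A)

/-! ### Topologies -/

/-- The quotient topology on projective space induced by the topology of `K`. -/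
def projTop (K : Type*) [Field K] [TopologicalSpace K] (n : ℕ) :
    TopologicalSpace (Projectivization K (Fin n → K)) :=
  TopologicalSpace.coinduced
    (fun v : {v : Fin n → K // v ≠ 0} => Projectivization.mk K v.1 v.2) inferInstance

/-- The induced topology on the set of `K`-points of `S`. -/
def surfTop (F : MvPolynomial (Fin n) K) [TopologicalSpace K] :
    TopologicalSpace (zeroSet F) :=
  TopologicalSpace.induced Subtype.val (projTop K n)

/-- `K` (a topological field) is a local field: it is isomorphic, as a topological field,
to `ℝ`, to `ℂ`, or to a finite extension of `ℚ_p` for some prime `p` (with its canonical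
topology, namely the `ℚ_p`-vector space topology). -/
def IsLocalField (K : Type*) [Field K] [TopologicalSpace K] : Prop :=
  (∃ e : K ≃+* ℝ, IsHomeomorph e) ∨ (∃ e : K ≃+* ℂ, IsHomeomorph e) ∨
    (∃ (p : ℕ), p.Prime ∧ ∃ (_ : Fact p.Prime) (f : ℚ_[p] →+* K) (m : ℕ)
      (e : K ≃+ (Fin m → ℚ_[p])),
      (∀ (c : ℚ_[p]) (x : K), e (f c * x) = c • e x) ∧ IsHomeomorph e)

end CubicSurf

namespace CubicSurf

/-- The trilinear form with coefficients `c`. -/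
def tri {R : Type*} [CommRing R] (c : Fin 4 → Fin 4 → Fin 4 → R) (u v w : Fin 4 → R) : R :=
  ∑ i, ∑ j, ∑ k, c i j k * u i * v j * w k

section tri
variable {R A : Type*} [CommRing R] [CommRing A] (c : Fin 4 → Fin 4 → Fin 4 → R)

lemma tri_add1 (u u' v w : Fin 4 → R) : tri c (u + u') v w = tri c u v w + tri c u' v w := by
  simp only [tri, ← Finset.sum_add_distrib, Pi.add_apply]
  refine Finset.sum_congr rfl fun i _ => Finset.sum_congr rfl fun j _ =>
    Finset.sum_congr rfl fun k _ => by ring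

lemma tri_add2 (u v v' w : Fin 4 → R) : tri c u (v + v') w = tri c u v w + tri c u v' w := by
  simp only [tri, ← Finset.sum_add_distrib, Pi.add_apply]
  refine Finset.sum_congr rfl fun i _ => Finset.sum_congr rfl fun j _ =>
    Finset.sum_congr rfl fun k _ => by ring

lemma tri_add3 (u v w w' : Fin 4 → R) : tri c u v (w + w') = tri c u v w + tri c u v w' := by
  simp only [tri, ← Finset.sum_add_distrib, Pi.add_apply]
  refine Finset.sum_congr rfl fun i _ => Finset.sum_congr rfl fun j _ =>
    Finset.sum_congr rfl fun k _ => by ring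

lemma tri_smul1 (a : R) (u v w : Fin 4 → R) : tri c (a • u) v w = a * tri c u v w := by
  simp only [tri, Finset.mul_sum, Pi.smul_apply, smul_eq_mul]
  refine Finset.sum_congr rfl fun i _ => Finset.sum_congr rfl fun j _ =>
    Finset.sum_congr rfl fun k _ => by ring

lemma tri_smul2 (a : R) (u v w : Fin 4 → R) : tri c u (a • v) w = a * tri c u v w := by
  simp only [tri, Finset.mul_sum, Pi.smul_apply, smul_eq_mul]
  refine Finset.sum_congr rfl fun i _ => Finset.sum_congr rfl fun j _ =>
    Finset.sum_congr rfl fun k _ => by ring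

lemma tri_smul3 (a : R) (u v w : Fin 4 → R) : tri c u v (a • w) = a * tri c u v w := by
  simp only [tri, Finset.mul_sum, Pi.smul_apply, smul_eq_mul]
  refine Finset.sum_congr rfl fun i _ => Finset.sum_congr rfl fun j _ =>
    Finset.sum_congr rfl fun k _ => by ring

lemma tri_map (φ : R →+* A) (u v w : Fin 4 → R) :
    tri (fun i j k => φ (c i j k)) (fun i => φ (u i)) (fun i => φ (v i)) (fun i => φ (w i))
      = φ (tri c u v w) := by
  simp [tri, map_sum, map_mul]

/-- The cubic form `f(u) = T(u,u,u)`. -/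
def cf (u : Fin 4 → R) : R := tri c u u u

/-- The directional derivative. -/
def cD (u v : Fin 4 → R) : R := tri c v u u + tri c u v u + tri c u u v

/-- The full polarization. -/
def cE (u v w : Fin 4 → R) : R :=
  tri c u v w + tri c u w v + tri c v u w + tri c v w u + tri c w u v + tri c w v u

lemma cf_comb (s t : R) (u v : Fin 4 → R) :
    cf c (s • u + t • v) = s ^ 3 * cf c u + s ^ 2 * t * cD c u v + s * t ^ 2 * cD c v u
      + t ^ 3 * cf c v := by
  simp only [cf, cD, tri_add1, tri_add2, tri_add3, tri_smul1, tri_smul2, tri_smul3]; ring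

lemma cD_right (s t : R) (u v w : Fin 4 → R) :
    cD c u (s • v + t • w) = s * cD c u v + t * cD c u w := by
  simp only [cD, tri_add1, tri_add2, tri_add3, tri_smul1, tri_smul2, tri_smul3]; ring

lemma cD_left (s t : R) (u v w : Fin 4 → R) :
    cD c (s • u + t • v) w = s ^ 2 * cD c u w + s * t * cE c u v w + t ^ 2 * cD c v w := by
  simp only [cD, cE, tri_add1, tri_add2, tri_add3, tri_smul1, tri_smul2, tri_smul3]; ring

lemma cE_3 (s t : R) (u v w w' : Fin 4 → R) :
    cE c u v (s • w + t • w') = s * cE c u v w + t * cE c u v w' := by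
  simp only [cE, tri_add1, tri_add2, tri_add3, tri_smul1, tri_smul2, tri_smul3]; ring

lemma cE_swap12 (u v w : Fin 4 → R) : cE c u v w = cE c v u w := by
  simp only [cE]; ring

lemma cE_swap23 (u v w : Fin 4 → R) : cE c u v w = cE c u w v := by
  simp only [cE]; ring

lemma cE_self (u v : Fin 4 → R) : cE c u u v = 2 * cD c u v := by
  simp only [cE, cD]; ring

lemma cD_self (u : Fin 4 → R) : cD c u u = 3 * cf c u := by
  simp only [cf, cD]; ring

lemma cD_smul_right (s : R) (u v : Fin 4 → R) : cD c u (s • v) = s * cD c u v := by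
  simp only [cD, tri_smul1, tri_smul2, tri_smul3]; ring

lemma cD_add_right (u v w : Fin 4 → R) : cD c u (v + w) = cD c u v + cD c u w := by
  simp only [cD, tri_add1, tri_add2, tri_add3]; ring

lemma cD_smul_left (s : R) (u v : Fin 4 → R) : cD c (s • u) v = s ^ 2 * cD c u v := by
  simp only [cD, tri_smul1, tri_smul2, tri_smul3]; ring

lemma cf_map (φ : R →+* A) (u : Fin 4 → R) :
    cf (fun i j k => φ (c i j k)) (fun i => φ (u i)) = φ (cf c u) := tri_map c φ u u u

lemma cD_map (φ : R →+* A) (u v : Fin 4 → R) :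
    cD (fun i j k => φ (c i j k)) (fun i => φ (u i)) (fun i => φ (v i)) = φ (cD c u v) := by
  simp only [cD, tri_map, map_add]

lemma cE_map (φ : R →+* A) (u v w : Fin 4 → R) :
    cE (fun i j k => φ (c i j k)) (fun i => φ (u i)) (fun i => φ (v i)) (fun i => φ (w i))
      = φ (cE c u v w) := by
  simp only [cE, tri_map, map_add]

/-- The cubic polynomial with coefficients `c`. -/
def cpoly : MvPolynomial (Fin 4) R := ∑ i, ∑ j, ∑ k, C (c i j k) * X i * X j * X k

lemma cpoly_map (φ : R →+* A) : MvPolynomial.map φ (cpoly c) = cpoly (fun i j k => φ (c i j k)) := by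
  simp [cpoly, map_sum]

lemma eval_cpoly (u : Fin 4 → R) : eval u (cpoly c) = cf c u := by
  simp [cpoly, cf, tri, map_sum]

lemma eval_pderiv_cpoly (u : Fin 4 → R) (l : Fin 4) :
    eval u (pderiv l (cpoly c)) = cD c u (Pi.single l 1) := by
  simp only [cpoly, cD, tri, map_sum, ← Finset.sum_add_distrib]
  refine Finset.sum_congr rfl fun i _ => Finset.sum_congr rfl fun j _ =>
    Finset.sum_congr rfl fun k _ => ?_
  simp only [Derivation.leibniz, pderiv_C, pderiv_X, smul_eq_mul, map_add, map_mul, eval_X, eval_C,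
    mul_zero, add_zero]
  have h : ∀ m : Fin 4, eval u ((Pi.single l 1 : Fin 4 → MvPolynomial (Fin 4) R) m)
      = (Pi.single l 1 : Fin 4 → R) m := by
    intro m
    by_cases hm : m = l
    · subst hm; simp
    · simp [Pi.single_eq_of_ne hm]
  rw [h, h, h]; ring

lemma cD_sum (u v : Fin 4 → R) : ∑ l, cD c u (Pi.single l 1) * v l = cD c u v := by
  have hv : v = v 0 • Pi.single 0 1 + (v 1 • Pi.single 1 1 + (v 2 • Pi.single 2 1
      + v 3 • (Pi.single 3 1 : Fin 4 → R))) := by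
    funext i; fin_cases i <;> simp
  conv_rhs => rw [hv]
  simp only [cD_add_right, cD_smul_right, Fin.sum_univ_four]
  ring

lemma lineRestrict_cpoly {k : Type*} [Field k] (c : Fin 4 → Fin 4 → Fin 4 → k) (u v : Fin 4 → k) :
    lineRestrict (cpoly c) u v = C (cf c u) * X 0 ^ 3 + C (cD c u v) * (X 0 ^ 2 * X 1)
      + C (cD c v u) * (X 0 * X 1 ^ 2) + C (cf c v) * X 1 ^ 3 := by
  have h1 : lineRestrict (cpoly c) u v
      = cf (fun i j l => (C (c i j l) : MvPolynomial (Fin 2) k))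
          ((X 0 : MvPolynomial (Fin 2) k) • (fun i => C (u i)) + (X 1 : MvPolynomial (Fin 2) k) • (fun i => C (v i))) := by
    simp only [lineRestrict, cpoly, cf, tri, map_sum, map_mul, aeval_X, aeval_C, Pi.add_apply,
      Pi.smul_apply, smul_eq_mul, algebraMap_eq]
    refine Finset.sum_congr rfl fun i _ => Finset.sum_congr rfl fun j _ =>
      Finset.sum_congr rfl fun k _ => by ring
  rw [h1, cf_comb, cf_map, cf_map, cD_map, cD_map]
  ring

lemma lineRestrict_eq_zero {k : Type*} [Field k] (c : Fin 4 → Fin 4 → Fin 4 → k) (u v : Fin 4 → k)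
    (h : lineRestrict (cpoly c) u v = 0) : cf c u = 0 ∧ cD c u v = 0 ∧ cD c v u = 0 ∧ cf c v = 0 := by
  rw [lineRestrict_cpoly] at h
  have h2 := congrArg (aeval ![(Polynomial.X : Polynomial k), 1]) h
  simp only [map_add, map_mul, map_pow, aeval_X, aeval_C, map_zero, Matrix.cons_val_zero,
    Matrix.cons_val_one, one_pow, mul_one, ← Polynomial.C_eq_algebraMap] at h2
  refine ⟨?_, ?_, ?_, ?_⟩
  · have := congrArg (fun p => Polynomial.coeff p 3) h2
    simpa [Polynomial.coeff_C, Polynomial.coeff_X, Polynomial.coeff_X_pow] using this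
  · have := congrArg (fun p => Polynomial.coeff p 2) h2
    simpa [Polynomial.coeff_C, Polynomial.coeff_X, Polynomial.coeff_X_pow] using this
  · have := congrArg (fun p => Polynomial.coeff p 1) h2
    simpa [Polynomial.coeff_C, Polynomial.coeff_X, Polynomial.coeff_X_pow] using this
  · have := congrArg (fun p => Polynomial.coeff p 0) h2
    simpa [Polynomial.coeff_C, Polynomial.coeff_X, Polynomial.coeff_X_pow] using this

end tri

lemma cpoly_single {k : Type*} [Field k] (i' j' k' : Fin 4) :
    cpoly (R := k) (fun i j k => if i = i' then if j = j' then if k = k' then 1 else 0 else 0 else 0)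
      = X i' * X j' * X k' := by
  unfold cpoly
  rw [Finset.sum_eq_single i' (by intro b _ hb; simp [hb]) (by simp),
    Finset.sum_eq_single j' (by intro b _ hb; simp [hb]) (by simp),
    Finset.sum_eq_single k' (by intro b _ hb; simp [hb]) (by simp)]
  simp

/-- `cpoly` as a linear map. -/
def cpolyHom (k : Type*) [Field k] :
    (Fin 4 → Fin 4 → Fin 4 → k) →ₗ[k] MvPolynomial (Fin 4) k where
  toFun c := cpoly c
  map_add' c d := by
    simp only [cpoly, ← Finset.sum_add_distrib, Pi.add_apply, map_add]
    refine Finset.sum_congr rfl fun i _ => Finset.sum_congr rfl fun j _ =>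
      Finset.sum_congr rfl fun k _ => by ring
  map_smul' a c := by
    simp only [cpoly, Finset.smul_sum, Pi.smul_apply, smul_eq_mul, map_mul, RingHom.id_apply,
      MvPolynomial.smul_eq_C_mul]
    refine Finset.sum_congr rfl fun i _ => Finset.sum_congr rfl fun j _ =>
      Finset.sum_congr rfl fun k _ => by ring

lemma cpolyHom_apply {k : Type*} [Field k] (c : Fin 4 → Fin 4 → Fin 4 → k) :
    cpolyHom k c = cpoly c := rfl

open scoped Pointwise in
lemma exists_cpoly {k : Type*} [Field k] (F : MvPolynomial (Fin 4) k) (hF : F.IsHomogeneous 3) :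
    ∃ c, F = cpoly c := by
  have hmem : F ∈ homogeneousSubmodule (Fin 4) k 3 := hF
  rw [← homogeneousSubmodule_one_pow, homogeneousSubmodule_one_eq_span_X, Submodule.span_pow] at hmem
  have hle : Submodule.span k ((Set.range (X : Fin 4 → MvPolynomial (Fin 4) k)) ^ 3)
      ≤ LinearMap.range (cpolyHom k) := by
    rw [Submodule.span_le]
    intro p hp
    rw [pow_succ, pow_succ, pow_one, Set.mem_mul] at hp
    obtain ⟨q, hq, z, ⟨k', rfl⟩, rfl⟩ := hp
    rw [Set.mem_mul] at hq
    obtain ⟨x, ⟨i', rfl⟩, y, ⟨j', rfl⟩, rfl⟩ := hq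
    rw [← cpoly_single, ← cpolyHom_apply]
    exact LinearMap.mem_range_self _ _
  obtain ⟨c, hc⟩ := LinearMap.mem_range.mp (hle hmem)
  exact ⟨c, by rw [← hc, cpolyHom_apply]⟩

end CubicSurf

namespace CubicSurf

section sp
variable {K : Type*} [Field K]

/-- The vector `v` represents a point in the span of `B`. -/
def InSp (c : Fin 4 → Fin 4 → Fin 4 → K) (B : Set (Projectivization K (Fin 4 → K)))
    (v : Fin 4 → K) : Prop :=
  ∃ h : v ≠ 0, SpanMem (cpoly c) B (Projectivization.mk K v h)

lemma cpoly_hom (c : Fin 4 → Fin 4 → Fin 4 → K) : (cpoly c).IsHomogeneous 3 := by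
  unfold cpoly
  refine IsHomogeneous.sum _ _ _ fun i _ => IsHomogeneous.sum _ _ _ fun j _ =>
    IsHomogeneous.sum _ _ _ fun k _ => ?_
  have := (((isHomogeneous_C (Fin 4) (c i j k)).mul (isHomogeneous_X K i)).mul
    (isHomogeneous_X K j)).mul (isHomogeneous_X K k)
  simpa using this

lemma isLine_span {u v : Fin 4 → K} (h : LinearIndependent K ![u, v]) :
    IsLine (Submodule.span K {u, v}) := by
  have := finrank_span_eq_card h
  rw [Matrix.range_cons_cons_empty] at this
  simpa [IsLine] using this

lemma InSp_tangent {c : Fin 4 → Fin 4 → Fin 4 → K} {B : Set (Projectivization K (Fin 4 → K))}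
    {u v : Fin 4 → K} (hu : InSp c B u) (hli : LinearIndependent K ![u, v])
    (fu : cf c u = 0) (fv : cf c v = 0) (h1 : cD c u v = 0) (h2 : cD c v u ≠ 0) : InSp c B v := by
  obtain ⟨hu0, hu⟩ := hu
  have hv0 : v ≠ 0 := hli.ne_zero 1
  have huW : u ∈ Submodule.span K {u, v} := Submodule.subset_span (by simp)
  have hvW : v ∈ Submodule.span K {u, v} := Submodule.subset_span (by simp)
  refine ⟨hv0, SpanMem.secant _ _ _ (Submodule.span K {u, v}) (isLine_span hli) ?_ hu hu
    (mk_mem_zeroSet (cpoly_hom c) hv0 (by rw [eval_cpoly, fv])) ?_⟩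
  · intro hW
    exact h2 (lineRestrict_eq_zero c u v (hW u v huW hvW)).2.2.1
  · refine ⟨u, v, huW, hvW, hli, cD c v u, ![1, 1, 0], ![0, 0, 1], ?_, h2, ?_, ?_, ?_, ?_⟩
    · intro k; fin_cases k <;> simp [hu0, hv0]
    · rw [lineRestrict_cpoly, fu, fv, h1, Fin.prod_univ_three]
      simp
      left
      ring
    · congr 1; simp
    · congr 1; simp
    · congr 1; simp

lemma InSp_secant {c : Fin 4 → Fin 4 → Fin 4 → K} {B : Set (Projectivization K (Fin 4 → K))}
    {u v : Fin 4 → K} (hv : InSp c B v) (hw : InSp c B (cD c v u • u + (- cD c u v) • v))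
    (hli : LinearIndependent K ![u, v])
    (fu : cf c u = 0) (fv : cf c v = 0) (h1 : cD c u v ≠ 0) : InSp c B u := by
  obtain ⟨hv0, hv⟩ := hv
  obtain ⟨hw0, hw⟩ := hw
  have hu0 : u ≠ 0 := hli.ne_zero 0
  have huW : u ∈ Submodule.span K {u, v} := Submodule.subset_span (by simp)
  have hvW : v ∈ Submodule.span K {u, v} := Submodule.subset_span (by simp)
  refine ⟨hu0, SpanMem.secant _ _ _ (Submodule.span K {u, v}) (isLine_span hli) ?_ hv hw
    (mk_mem_zeroSet (cpoly_hom c) hu0 (by rw [eval_cpoly, fu])) ?_⟩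
  · intro hW
    exact h1 (lineRestrict_eq_zero c u v (hW u v huW hvW)).2.1
  · refine ⟨u, v, huW, hvW, hli, 1, ![0, cD c v u, 1], ![1, - cD c u v, 0], ?_, one_ne_zero,
      ?_, ?_, ?_, ?_⟩
    · intro k
      fin_cases k
      · simpa using hv0
      · simpa using hw0
      · simpa using hu0
    · rw [lineRestrict_cpoly, fu, fv, Fin.prod_univ_three]
      simp
      ring
    · congr 1; simp
    · congr 1
    · congr 1; simp

/-- Expansion on the tangent plane. -/
lemma plane_exp (c : Fin 4 → Fin 4 → Fin 4 → K) {Q R N : Fin 4 → K}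
    (fQ : cf c Q = 0) (fR : cf c R = 0) (hQR : cD c Q R = 0) (hRQ : cD c R Q = 0)
    (hQN : cD c Q N = 0) (x y z : K) :
    cf c (x • Q + y • R + z • N) = z * (x * (y * cE c Q R N + z * cD c N Q)
      + (y ^ 2 * cD c R N + y * z * cD c N R + z ^ 2 * cf c N)) ∧
    cD c (x • Q + y • R + z • N) Q = z * (y * cE c Q R N + z * cD c N Q) := by
  have e0 : x • Q + y • R + z • N = (1 : K) • (x • Q + y • R) + z • N := by simp
  constructor
  · rw [e0, cf_comb, cf_comb, cD_left, cD_right, fQ, fR, hQR, hRQ, hQN]; ring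
  · have h1 : cE c (x • Q + y • R) N Q = y * cE c Q R N := by
      rw [cE_swap12, cE_swap23, cE_3, cE_swap12 c N Q Q, cE_swap23 c Q N Q, cE_self, hQN,
        cE_swap12 c N Q R, cE_swap23 c Q N R]
      ring
    have h2 : cE c Q R Q = 0 := by rw [cE_swap23, cE_self, hQR, mul_zero]
    rw [e0, cD_left, cD_left, cD_self, h1, h2, fQ, hRQ]
    ring

/-- A smooth residual conic: every point off the line is in the span. -/
lemma off_line {c : Fin 4 → Fin 4 → Fin 4 → K} {B : Set (Projectivization K (Fin 4 → K))}
    {Q R N : Fin 4 → K} (hQ : InSp c B Q) (hli : LinearIndependent K ![Q, R, N])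
    (fQ : cf c Q = 0) (fR : cf c R = 0) (hQR : cD c Q R = 0) (hRQ : cD c R Q = 0)
    (hQN : cD c Q N = 0)
    (hΔ : cE c Q R N * cD c N Q * cD c N R - cD c R N * cD c N Q ^ 2
      - cf c N * cE c Q R N ^ 2 ≠ 0) (x y z : K) (hz : z ≠ 0)
    (hf : cf c (x • Q + y • R + z • N) = 0) : InSp c B (x • Q + y • R + z • N) := by
  obtain ⟨e1, e2⟩ := plane_exp c fQ fR hQR hRQ hQN x y z
  have hli2 : LinearIndependent K ![Q, x • Q + y • R + z • N] := by
    rw [LinearIndependent.pair_iff]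
    intro s t hst
    rw [Fintype.linearIndependent_iff] at hli
    have h := hli ![s + t * x, t * y, t * z] (by
      rw [Fin.sum_univ_three, ← hst]; simp; module)
    have h2 := h 2
    have h0 := h 0
    simp [hz] at h2 h0
    subst h2
    simpa using h0
  refine InSp_tangent hQ hli2 fQ hf ?_ ?_
  · rw [cD_add_right, cD_add_right, cD_smul_right, cD_smul_right, cD_smul_right, cD_self, fQ, hQR,
      hQN]; ring
  · rw [e2]
    intro h
    have h3 : y * cE c Q R N + z * cD c N Q = 0 := by
      rcases mul_eq_zero.mp h with h | h
      · exact absurd h hz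
      · exact h
    rw [e1, h3] at hf
    have h4 : y ^ 2 * cD c R N + y * z * cD c N R + z ^ 2 * cf c N = 0 := by
      rcases mul_eq_zero.mp hf with h | h
      · exact absurd h hz
      · simpa using h
    apply hΔ
    have : z ^ 2 * (cE c Q R N * cD c N Q * cD c N R - cD c R N * cD c N Q ^ 2
      - cf c N * cE c Q R N ^ 2) = 0 := by
      linear_combination (-(cE c Q R N) ^ 2) * h4
        + (z * cE c Q R N * cD c N R - (z * cD c N Q - y * cE c Q R N) * cD c R N) * h3
    rcases mul_eq_zero.mp this with h | h
    · exact absurd h (pow_ne_zero 2 hz)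
    · exact h

/-- Points on the line. -/
lemma on_line {c : Fin 4 → Fin 4 → Fin 4 → K} {B : Set (Projectivization K (Fin 4 → K))}
    {Q R N : Fin 4 → K} (hQ : InSp c B Q) (hli : LinearIndependent K ![Q, R, N])
    (fQ : cf c Q = 0) (fR : cf c R = 0) (hQR : cD c Q R = 0) (hRQ : cD c R Q = 0)
    (hQN : cD c Q N = 0)
    (hΔ : cE c Q R N * cD c N Q * cD c N R - cD c R N * cD c N Q ^ 2
      - cf c N * cE c Q R N ^ 2 ≠ 0) (r s : K) (hJ : cD c (r • Q + s • R) N ≠ 0) :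
    InSp c B (r • Q + s • R) := by
  have hA : ∃ x y z : K, z ≠ 0 ∧ cf c (x • Q + y • R + z • N) = 0 := by
    have key : ∀ y : K, y * cE c Q R N + cD c N Q ≠ 0 →
        ∃ x y z : K, z ≠ 0 ∧ cf c (x • Q + y • R + z • N) = 0 := by
      intro y hy
      refine ⟨-(y ^ 2 * cD c R N + y * cD c N R + cf c N) / (y * cE c Q R N + cD c N Q), y, 1,
        one_ne_zero, ?_⟩
      rw [(plane_exp c fQ fR hQR hRQ hQN _ y 1).1]
      field_simp
      ring
    by_cases h0 : cD c N Q = 0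
    · refine key 1 ?_
      intro h1
      apply hΔ
      have h2 : cE c Q R N = 0 := by linear_combination h1 - h0
      rw [h0, h2]; ring
    · exact key 0 (by simpa using h0)
  obtain ⟨x, y, z, hz, hf⟩ := hA
  have hAs := off_line hQ hli fQ fR hQR hRQ hQN hΔ x y z hz hf
  set u := r • Q + s • R with hu
  set v := x • Q + y • R + z • N with hv
  have fu : cf c u = 0 := by rw [hu, cf_comb, fQ, fR, hQR, hRQ]; ring
  have huQ : cD c u Q = 0 := by
    rw [hu, cD_left, cD_self, fQ, hRQ, cE_swap23, cE_self, hQR]; ring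
  have huR : cD c u R = 0 := by
    rw [hu, cD_left, cD_self, fR, hQR, cE_swap12, cE_swap23, cE_self, hRQ]; ring
  have huv : cD c u v = z * cD c u N := by
    rw [hv, cD_add_right, cD_add_right, cD_smul_right, cD_smul_right, cD_smul_right, huQ, huR]; ring
  have huv0 : cD c u v ≠ 0 := by rw [huv]; exact mul_ne_zero hz hJ
  have hli2 : LinearIndependent K ![u, v] := by
    rw [LinearIndependent.pair_iff]
    intro a b hab
    have h1 := congrArg (cD c u) hab
    have z0 : cD c u 0 = 0 := by simpa using cD_smul_right c 0 u u
    rw [cD_right, cD_self, fu, z0] at h1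
    have hb : b = 0 := by simpa [huv0] using h1
    subst hb
    have hu0 : u ≠ 0 := by
      rintro h
      apply hJ
      rw [h]
      simpa using cD_smul_left c 0 u N
    simpa [hu0] using hab
  refine InSp_secant hAs ?_ hli2 fu hf huv0
  have e : cD c v u • u + (- cD c u v) • v
      = (cD c v u * r - cD c u v * x) • Q + (cD c v u * s - cD c u v * y) • R
        + (- cD c u v * z) • N := by
    conv_lhs => rw [hu, hv]
    module
  have hw : cf c (cD c v u • u + (- cD c u v) • v) = 0 := by
    rw [cf_comb, fu, hf]; ring
  rw [e] at hw ⊢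
  exact off_line hQ hli fQ fR hQR hRQ hQN hΔ _ _ _ (mul_ne_zero (neg_ne_zero.mpr huv0) hz) hw

end sp
end CubicSurf

namespace CubicSurf

section lin
variable {K : Type*} [Field K]

lemma exists_adapted (g : (Fin 4 → K) →ₗ[K] K) (hg : g ≠ 0) (W : Submodule K (Fin 4 → K))
    (hW : Module.finrank K W = 2) (hWg : ∀ v ∈ W, g v = 0) (u0 : Fin 4 → K) (hu0 : u0 ∈ W)
    (hne : u0 ≠ 0) : ∃ u1 u2 u3 : Fin 4 → K, u1 ∈ W ∧ g u2 = 0 ∧ g u3 ≠ 0 ∧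
      LinearIndependent K ![u0, u1, u2, u3] ∧ (∀ v ∈ W, ∃ x y : K, v = x • u0 + y • u1) ∧
      (∀ v, ∃ x y z w : K, v = x • u0 + y • u1 + z • u2 + w • u3) := by
  obtain ⟨u3, hu3⟩ : ∃ u3, g u3 ≠ 0 := by
    by_contra! h
    exact hg (LinearMap.ext h)
  have hle : W ≤ LinearMap.ker g := fun v hv => LinearMap.mem_ker.mpr (hWg v hv)
  obtain ⟨u1, hu1, hu1'⟩ : ∃ u1 ∈ W, u1 ∉ Submodule.span K {u0} := by
    by_contra! h
    have := Submodule.finrank_mono (R := K) (show W ≤ Submodule.span K {u0} from h)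
    rw [finrank_span_singleton hne, hW] at this
    omega
  obtain ⟨u2, hu2, hu2'⟩ : ∃ u2 ∈ LinearMap.ker g, u2 ∉ W := by
    by_contra! h
    have h1 := Submodule.finrank_mono (R := K) (show LinearMap.ker g ≤ W from h)
    have h2 := LinearMap.finrank_range_add_finrank_ker g
    have h3 := Submodule.finrank_le (LinearMap.range g)
    simp at h2 h3
    omega
  have hli : LinearIndependent K ![u0, u1, u2, u3] := by
    rw [Fintype.linearIndependent_iff]
    intro a ha
    simp only [Fin.sum_univ_four, Matrix.cons_val] at ha
    have h3 : a 3 = 0 := by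
      have := congrArg g ha
      simpa [hWg u0 hu0, hWg u1 hu1, LinearMap.mem_ker.mp hu2, hu3] using this
    rw [h3, zero_smul, add_zero] at ha
    have h2 : a 2 = 0 := by
      by_contra h
      apply hu2'
      have : a 2 • u2 ∈ W := by
        rw [show a 2 • u2 = -(a 0 • u0 + a 1 • u1) from by rw [eq_neg_iff_add_eq_zero, ← ha]; abel]
        exact W.neg_mem (W.add_mem (W.smul_mem _ hu0) (W.smul_mem _ hu1))
      exact (W.smul_mem_iff h).mp this
    rw [h2, zero_smul, add_zero] at ha
    have h1 : a 1 = 0 := by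
      by_contra h
      apply hu1'
      have : a 1 • u1 ∈ Submodule.span K {u0} := by
        rw [show a 1 • u1 = -(a 0 • u0) from by rw [eq_neg_iff_add_eq_zero, ← ha]; abel]
        exact Submodule.neg_mem _ (Submodule.smul_mem _ _ (Submodule.mem_span_singleton_self u0))
      exact (Submodule.smul_mem_iff _ h).mp this
    rw [h1, zero_smul, add_zero] at ha
    have h0 : a 0 = 0 := by simpa [hne] using ha
    intro i
    fin_cases i <;> assumption
  refine ⟨u1, u2, u3, hu1, LinearMap.mem_ker.mp hu2, hu3, hli, ?_, ?_⟩
  · have hall : ∀ v, ∃ a : Fin 4 → K, ∑ i, a i • ![u0, u1, u2, u3] i = v := by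
      intro v
      rw [← Submodule.mem_span_range_iff_exists_fun,
        hli.span_eq_top_of_card_eq_finrank' (by simp)]
      trivial
    have hli2 : LinearIndependent K ![u0, u1] := by
      rw [LinearIndependent.pair_iff]
      intro s t hst
      rw [Fintype.linearIndependent_iff] at hli
      have h := hli ![s, t, 0, 0] (by simp [Fin.sum_univ_four, hst])
      exact ⟨h 0, h 1⟩
    have hsp : Submodule.span K {u0, u1} = W := by
      apply Submodule.eq_of_le_of_finrank_eq
      · rw [Submodule.span_le]
        rintro x (rfl | rfl)
        · exact hu0
        · exact hu1
      · rw [hW]; exact isLine_span hli2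
    intro v hv
    rw [← hsp, Submodule.mem_span_pair] at hv
    obtain ⟨x, y, h⟩ := hv
    exact ⟨x, y, h.symm⟩
  · intro v
    have : v ∈ Submodule.span K (Set.range ![u0, u1, u2, u3]) := by
      rw [hli.span_eq_top_of_card_eq_finrank' (by simp)]
      trivial
    rw [Submodule.mem_span_range_iff_exists_fun] at this
    obtain ⟨a, ha⟩ := this
    refine ⟨a 0, a 1, a 2, a 3, ?_⟩
    rw [← ha, Fin.sum_univ_four]
    rfl

lemma clVec_li {L : Type*} [Field L] (φ : K →+* L) {u0 u1 u2 u3 : Fin 4 → K}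
    (h : LinearIndependent K ![u0, u1, u2, u3]) :
    LinearIndependent L ![clVec φ u0, clVec φ u1, clVec φ u2, clVec φ u3] := by
  have h1 : IsUnit (Matrix.of ![u0, u1, u2, u3]) := by
    rw [← Matrix.linearIndependent_rows_iff_isUnit]
    exact h
  have h2 := h1.map φ.mapMatrix
  rw [← Matrix.linearIndependent_rows_iff_isUnit] at h2
  convert h2 using 1
  funext i j
  fin_cases i <;> simp [clVec, Matrix.row]

lemma clVec_add {L : Type*} [Field L] (φ : K →+* L) (u v : Fin 4 → K) :
    clVec φ (u + v) = clVec φ u + clVec φ v := by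
  funext i; simp [clVec]

lemma clVec_smul {L : Type*} [Field L] (φ : K →+* L) (a : K) (v : Fin 4 → K) :
    clVec φ (a • v) = φ a • clVec φ v := by
  funext i; simp [clVec]

/-- If a cubic contains the generators of a line with contact, it contains the line. -/
lemma lineOnSurf_span (c : Fin 4 → Fin 4 → Fin 4 → K) {u v : Fin 4 → K} (fu : cf c u = 0)
    (fv : cf c v = 0) (huv : cD c u v = 0) (hvu : cD c v u = 0) :
    LineOnSurf (cpoly c) (Submodule.span K {u, v}) := by
  have hf : ∀ s t : K, cf c (s • u + t • v) = 0 := by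
    intro s t
    rw [cf_comb, fu, fv, huv, hvu]; ring
  have hD : ∀ s t s' t' : K, cD c (s • u + t • v) (s' • u + t' • v) = 0 := by
    intro s t s' t'
    have h1 : cE c u v u = 0 := by rw [cE_swap23, cE_self, huv, mul_zero]
    have h2 : cE c u v v = 0 := by rw [cE_swap12, cE_swap23, cE_self, hvu, mul_zero]
    rw [cD_right, cD_left, cD_left, cD_self, cD_self, fu, fv, huv, hvu, h1, h2]; ring
  intro a b ha hb
  rw [Submodule.mem_span_pair] at ha hb
  obtain ⟨s, t, rfl⟩ := ha
  obtain ⟨s', t', rfl⟩ := hb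
  rw [lineRestrict_cpoly, hf, hf, hD, hD]
  simp

/-- A suitable parameter avoiding the bad points. -/
lemma exists_good (hK : 13 ≤ Cardinal.mk K)
    (a1 a2 b0 b1 b2 c0 c1 d0 d1 e0 e1 k0 k1 k2 k3 : K) (hb0 : b0 ≠ 0) (ha : a1 ≠ 0 ∨ a2 ≠ 0)
    (hd : a1 * c0 * c1 - a2 * c0 ^ 2 - k0 * a1 ^ 2 ≠ 0) :
    ∃ t A B α β γ δ ε ζ : K, A = a1 * t + a2 * t ^ 2 ∧ B = b0 + b1 * t + b2 * t ^ 2 ∧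
      α = - (A * b0) ∧ β = B * a1 - A * b1 ∧ γ = B * a2 - A * b2 ∧
      δ = B ^ 2 * c0 - A * B * d0 + A ^ 2 * e0 ∧
      ε = B ^ 2 * c1 - A * B * d1 + A ^ 2 * e1 ∧
      ζ = B ^ 3 * k0 - B ^ 2 * A * k1 + B * A ^ 2 * k2 - A ^ 3 * k3 ∧ A ≠ 0 ∧
      4 * α * γ * ζ + β * δ * ε - α * ε ^ 2 - γ * δ ^ 2 - ζ * β ^ 2 ≠ 0 := by
  classical
  let pA : Polynomial K := Polynomial.C a1 * Polynomial.X + Polynomial.C a2 * Polynomial.X ^ 2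
  let pB : Polynomial K := Polynomial.C b0 + Polynomial.C b1 * Polynomial.X
    + Polynomial.C b2 * Polynomial.X ^ 2
  have dA : pA.natDegree ≤ 2 := by unfold pA; compute_degree
  have dB : pB.natDegree ≤ 2 := by unfold pB; compute_degree
  let pα : Polynomial K := - (pA * Polynomial.C b0)
  let pβ : Polynomial K := pB * Polynomial.C a1 - pA * Polynomial.C b1
  let pγ : Polynomial K := pB * Polynomial.C a2 - pA * Polynomial.C b2
  let pδ : Polynomial K := pB ^ 2 * Polynomial.C c0 - pA * pB * Polynomial.C d0
    + pA ^ 2 * Polynomial.C e0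
  let pε : Polynomial K := pB ^ 2 * Polynomial.C c1 - pA * pB * Polynomial.C d1
    + pA ^ 2 * Polynomial.C e1
  let pζ : Polynomial K := pB ^ 3 * Polynomial.C k0 - pB ^ 2 * pA * Polynomial.C k1
    + pB * pA ^ 2 * Polynomial.C k2 - pA ^ 3 * Polynomial.C k3
  let pΔ : Polynomial K := Polynomial.C 4 * pα * pγ * pζ + pβ * pδ * pε - pα * pε ^ 2
    - pγ * pδ ^ 2 - pζ * pβ ^ 2
  have dα : pα.natDegree ≤ 2 := by unfold pα; compute_degree; omega
  have dβ : pβ.natDegree ≤ 2 := by unfold pβ; compute_degree <;> omega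
  have dγ : pγ.natDegree ≤ 2 := by unfold pγ; compute_degree <;> omega
  have dδ : pδ.natDegree ≤ 4 := by unfold pδ; compute_degree <;> omega
  have dε : pε.natDegree ≤ 4 := by unfold pε; compute_degree <;> omega
  have dζ : pζ.natDegree ≤ 6 := by unfold pζ; compute_degree <;> omega
  have dΔ : pΔ.natDegree ≤ 10 := by unfold pΔ; compute_degree <;> omega
  have hA0 : pA ≠ 0 := by
    intro h
    rcases ha with ha | ha
    · apply ha
      have := congrArg (fun p => Polynomial.coeff p 1) h
      simpa [pA, Polynomial.coeff_X, Polynomial.coeff_X_pow] using this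
    · apply ha
      have := congrArg (fun p => Polynomial.coeff p 2) h
      simpa [pA, Polynomial.coeff_X, Polynomial.coeff_X_pow] using this
  have hΔ0 : pΔ ≠ 0 := by
    intro h
    have h0 := congrArg (Polynomial.eval 0) h
    simp [pΔ, pα, pβ, pγ, pδ, pε, pζ, pA, pB] at h0
    have : b0 ^ 5 * (a1 * c0 * c1 - a2 * c0 ^ 2 - k0 * a1 ^ 2) = 0 := by
      linear_combination h0
    exact (mul_ne_zero (pow_ne_zero 5 hb0) hd) this
  obtain ⟨t, ht⟩ := Polynomial.exists_eval_ne_zero_of_natDegree_lt_card (pA * pΔ)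
    (mul_ne_zero hA0 hΔ0) (by
      have h12 : (pA * pΔ).natDegree ≤ 12 := by
        refine Polynomial.natDegree_mul_le.trans ?_
        omega
      calc ((pA * pΔ).natDegree : Cardinal) ≤ ((12 : ℕ) : Cardinal) := by exact_mod_cast h12
        _ < ((13 : ℕ) : Cardinal) := by exact_mod_cast (by norm_num : 12 < 13)
        _ ≤ Cardinal.mk K := by exact_mod_cast hK)
  rw [Polynomial.eval_mul] at ht
  refine ⟨t, pA.eval t, pB.eval t, pα.eval t, pβ.eval t, pγ.eval t, pδ.eval t, pε.eval t,
    pζ.eval t, ?_, ?_, ?_, ?_, ?_, ?_, ?_, ?_, left_ne_zero_of_mul ht, ?_⟩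
  · simp [pA]
  · simp [pB]
  · simp [pα]
  · simp [pβ]
  · simp [pγ]
  · simp [pδ]
  · simp [pε]
  · simp [pζ]
  · have := right_ne_zero_of_mul ht
    simpa [pΔ] using this

end lin
end CubicSurf

namespace CubicSurf

/-- Algebraic core: the span contains the line and its tangent section. -/
lemma core {K : Type*} [Field K] (hK : 13 ≤ Cardinal.mk K) (c : Fin 4 → Fin 4 → Fin 4 → K)
    (B : Set (Projectivization K (Fin 4 → K))) {u0 u1 u2 u3 : Fin 4 → K}
    (hli : LinearIndependent K ![u0, u1, u2, u3])
    (f0 : cf c u0 = 0) (f1 : cf c u1 = 0) (h01 : cD c u0 u1 = 0) (h10 : cD c u1 u0 = 0)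
    (h02 : cD c u0 u2 = 0) (h03 : cD c u0 u3 ≠ 0) (hB : InSp c B u0)
    (hsm : ∀ r s : K, (r ≠ 0 ∨ s ≠ 0) → cD c (r • u0 + s • u1) u2 = 0 →
      cD c (r • u0 + s • u1) u3 ≠ 0)
    (hred : cE c u0 u1 u2 ≠ 0 ∨ cD c u1 u2 ≠ 0)
    (hΔ : cE c u0 u1 u2 * cD c u2 u0 * cD c u2 u1 - cD c u1 u2 * cD c u2 u0 ^ 2
      - cf c u2 * cE c u0 u1 u2 ^ 2 ≠ 0) (r s : K) (hrs : r ≠ 0 ∨ s ≠ 0) :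
    InSp c B (r • u0 + s • u1) := by
  have hli3 : LinearIndependent K ![u0, u1, u2] := by
    rw [Fintype.linearIndependent_iff] at hli ⊢
    intro g hg
    have h := hli ![g 0, g 1, g 2, 0] (by
      rw [Fin.sum_univ_three] at hg
      rw [Fin.sum_univ_four, ← hg]; simp)
    intro i
    fin_cases i
    · exact h 0
    · exact h 1
    · exact h 2
  by_cases hR : cD c (r • u0 + s • u1) u2 = 0
  swap
  · exact on_line hB hli3 f0 f1 h01 h10 h02 hΔ r s hR
  have hR3 := hsm r s hrs hR
  obtain ⟨t, A, Bt, α, β, γ, δ, ε, ζ, hA, hBt, hα, hβ, hγ, hδ, hε, hζ, hA0, hD⟩ :=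
    exists_good hK (cE c u0 u1 u2) (cD c u1 u2) (cD c u0 u3) (cE c u0 u1 u3) (cD c u1 u3)
      (cD c u2 u0) (cD c u2 u1) (cE c u2 u3 u0) (cE c u2 u3 u1) (cD c u3 u0) (cD c u3 u1)
      (cf c u2) (cD c u2 u3) (cD c u3 u2) (cf c u3) h03 hred hΔ
  have hQ2 : cD c ((1 : K) • u0 + t • u1) u2 = A := by rw [cD_left, h02, hA]; ring
  have hQ3 : cD c ((1 : K) • u0 + t • u1) u3 = Bt := by rw [cD_left, hBt]; ring
  have hQs : InSp c B ((1 : K) • u0 + t • u1) :=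
    on_line hB hli3 f0 f1 h01 h10 h02 hΔ 1 t (by rw [hQ2]; exact hA0)
  set N := Bt • u2 + (-A) • u3 with hN
  set Q := (1 : K) • u0 + t • u1 with hQ
  have eα : cD c u0 N = α := by rw [hN, cD_right, h02, hα]; ring
  have eβ : cE c u0 u1 N = β := by rw [hN, cE_3, hβ]; ring
  have eγ : cD c u1 N = γ := by rw [hN, cD_right, hγ]; ring
  have eδ : cD c N u0 = δ := by rw [hN, cD_left, hδ]; ring
  have eε : cD c N u1 = ε := by rw [hN, cD_left, hε]; ring
  have eζ : cf c N = ζ := by rw [hN, cf_comb, hζ]; ring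
  have hQN : cD c Q N = 0 := by
    rw [hN, cD_right, hQ2, hQ3]; ring
  have hQN' : α + t * β + t ^ 2 * γ = 0 := by
    rw [← hQN, hQ, cD_left, eα, eβ, eγ]; ring
  have gE : cE c Q u1 N = β + 2 * t * γ := by
    rw [cE_swap12, cE_swap23, hQ, cE_3, cE_swap23, cE_swap12, eβ, cE_swap23 c u1 N u1, cE_self, eγ]
    ring
  have gD : cD c N Q = δ + t * ε := by rw [hQ, cD_right, eδ, eε]; ring
  have fQ : cf c Q = 0 := by rw [hQ, cf_comb, f0, f1, h01, h10]; ring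
  have hQ1 : cD c Q u1 = 0 := by
    rw [hQ, cD_left, cD_self, f1, h01, cE_swap12, cE_swap23, cE_self, h10]; ring
  have h1Q : cD c u1 Q = 0 := by
    rw [hQ, cD_right, cD_self, f1, h10]; ring
  have hliQ : LinearIndependent K ![Q, u1, N] := by
    rw [Fintype.linearIndependent_iff] at hli ⊢
    intro g hg
    have h := hli ![g 0, g 0 * t + g 1, g 2 * Bt, g 2 * (-A)] (by
      rw [Fin.sum_univ_three] at hg
      rw [Fin.sum_univ_four, ← hg]
      simp only [Matrix.cons_val, hQ, hN]
      module)
    have q0 : g 0 = 0 := h 0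
    have q1 : g 0 * t + g 1 = 0 := h 1
    have q2 : g 2 * (-A) = 0 := h 3
    intro i
    fin_cases i
    · exact q0
    · simpa [q0] using q1
    · simpa [hA0] using q2
  have e : r • u0 + s • u1 = r • Q + (s - r * t) • u1 := by rw [hQ]; module
  rw [e]
  refine on_line hQs hliQ fQ f1 hQ1 h1Q hQN ?_ _ _ ?_
  · rw [gE, gD, eε, eγ, eζ]
    intro h
    apply hD
    linear_combination h + (4 * γ * ζ - ε ^ 2) * hQN'
  · rw [← e, hN, cD_right, hR, mul_zero, zero_add]
    exact mul_ne_zero (neg_ne_zero.mpr hA0) hR3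

end CubicSurf

open CubicSurf MvPolynomial in
/-- Let `K` be a field with at least 13 elements, `S` a smooth cubic
surface over `K`, `ℓ` a `K`-line contained in `S`, and `P ∈ ℓ(K)` a point not lying on
any other (geometric) line contained in `S`. Then `ℓ(K) ⊆ Γ_P(K) ⊆ Span({P})`. -/
theorem line_points_spanned_by_point
    {K : Type*} [Field K] (hK : 13 ≤ Cardinal.mk K)
    (F : MvPolynomial (Fin 4) K) (hF : SmoothCubic F)
    (W : Submodule K (Fin 4 → K)) (hl : IsLine W) (hS : LineOnSurf F W)
    (P : Projectivization K (Fin 4 → K)) (hPW : OnLine W P) (hPS : P ∈ zeroSet F)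
    (honly : ¬ ∃ W' : Submodule (AlgebraicClosure K) (Fin 4 → AlgebraicClosure K),
      W' ≠ Submodule.span (AlgebraicClosure K)
        (clVec (algebraMap K (AlgebraicClosure K)) '' (W : Set (Fin 4 → K))) ∧
      IsLine W' ∧ LineOnSurf (clF F) W' ∧
      OnLine W' (clPt (algebraMap K (AlgebraicClosure K)) P)) :
    linePts W ⊆ GammaPts F P ∧ GammaPts F P ⊆ Span F {P} := by
  obtain ⟨c, rfl⟩ := exists_cpoly F hF.1
  set φ := algebraMap K (AlgebraicClosure K) with hφ
  have hWf : ∀ u ∈ W, cf c u = 0 := fun u hu => (lineRestrict_eq_zero c u u (hS u u hu hu)).1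
  have hWD : ∀ u ∈ W, ∀ v ∈ W, cD c u v = 0 := fun u hu v hv =>
    (lineRestrict_eq_zero c u v (hS u v hu hv)).2.1
  have hte : ∀ Q, tangentEval (cpoly c) P Q = cD c P.rep Q.rep := by
    intro Q
    rw [tangentEval, ← cD_sum]
    simp only [eval_pderiv_cpoly]
  have hfirst : linePts W ⊆ GammaPts (cpoly c) P := by
    intro R hR
    refine ⟨?_, ?_⟩
    · show eval R.rep (cpoly c) = 0
      rw [eval_cpoly]; exact hWf _ hR
    · show tangentEval (cpoly c) P R = 0
      rw [hte]; exact hWD _ hPW _ hR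
  refine ⟨hfirst, ?_⟩
  -- smoothness
  let cb : Fin 4 → Fin 4 → Fin 4 → AlgebraicClosure K := fun i j k => φ (c i j k)
  have hclF : clF (cpoly c) = cpoly cb := cpoly_map c φ
  have mf : ∀ u, cf cb (clVec φ u) = φ (cf c u) := fun u => cf_map c φ u
  have mD : ∀ u v, cD cb (clVec φ u) (clVec φ v) = φ (cD c u v) := fun u v => cD_map c φ u v
  have mE : ∀ u v w, cE cb (clVec φ u) (clVec φ v) (clVec φ w) = φ (cE c u v w) :=
    fun u v w => cE_map c φ u v w
  have hsing : ∀ l : Fin 4, clVec φ (Pi.single l 1) = Pi.single l 1 := by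
    intro l
    funext i
    by_cases h : i = l
    · subst h; simp [clVec]
    · simp [clVec, Pi.single_eq_of_ne h]
  have hsmb : ∀ v : Fin 4 → AlgebraicClosure K, cf cb v = 0 →
      (∀ w : Fin 4 → K, cD cb v (clVec φ w) = 0) → v = 0 := by
    intro v hv hw
    refine hF.2 v ?_ ?_
    · rw [cpoly_map, eval_cpoly]; exact hv
    · intro i
      rw [cpoly_map, eval_pderiv_cpoly, ← hsing]
      exact hw _
  have hsmK : ∀ v : Fin 4 → K, v ≠ 0 → cf c v = 0 → ∃ w, cD c v w ≠ 0 := by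
    intro v hv0 hv
    by_contra! h
    refine clVec_ne_zero φ hv0 (hsmb _ (by rw [mf, hv, map_zero]) ?_)
    intro w
    rw [mD, h, map_zero]
  -- adapted basis
  let g : (Fin 4 → K) →ₗ[K] K :=
    { toFun := cD c P.rep
      map_add' := fun v w => cD_add_right c _ v w
      map_smul' := fun a v => cD_smul_right c a _ v }
  have hg : g ≠ 0 := by
    obtain ⟨w, hw⟩ := hsmK P.rep P.rep_nonzero (hWf _ hPW)
    intro h
    exact hw (congrArg (fun q : (Fin 4 → K) →ₗ[K] K => q w) h)
  obtain ⟨u1, u2, u3, hu1, h02, h03, hli, hWspan, hspan⟩ :=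
    exists_adapted g hg W hl (fun v hv => hWD _ hPW v hv) P.rep hPW P.rep_nonzero
  change cD c P.rep u2 = 0 at h02
  change cD c P.rep u3 ≠ 0 at h03
  have hP0 := P.rep_nonzero
  have hBP : InSp c {P} P.rep := ⟨hP0, SpanMem.base _ (by simp [Projectivization.mk_rep])⟩
  have hclP : ∀ W' : Submodule (AlgebraicClosure K) (Fin 4 → AlgebraicClosure K),
      clVec φ P.rep ∈ W' → OnLine W' (clPt φ P) := by
    intro W' h
    obtain ⟨a, ha⟩ := Projectivization.exists_smul_eq_mk_rep (AlgebraicClosure K)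
      (clVec φ P.rep) (clVec_ne_zero φ hP0)
    show (clPt φ P).rep ∈ W'
    rw [clPt, ← ha, Units.smul_def]
    exact W'.smul_mem _ h
  have hPW' : P.rep ∈ W := hPW
  generalize hu0 : P.rep = u0 at *
  have f0 := hWf u0 hPW'
  have f1 := hWf u1 hu1
  have h01 := hWD u0 hPW' u1 hu1
  have h10 := hWD u1 hu1 u0 hPW'
  have hlib := clVec_li φ hli
  rw [Fintype.linearIndependent_iff] at hlib
  have hallb : ∀ v, cD cb v (clVec φ u0) = 0 → cD cb v (clVec φ u1) = 0 →
      cD cb v (clVec φ u2) = 0 → cD cb v (clVec φ u3) = 0 → ∀ w, cD cb v (clVec φ w) = 0 := by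
    intro v q0 q1 q2 q3 w
    obtain ⟨x, y, z, t, rfl⟩ := hspan w
    simp only [clVec_add, clVec_smul, cD_add_right, cD_smul_right, q0, q1, q2, q3]
    ring
  -- the plane section is reduced along the line
  have hred : cE c u0 u1 u2 ≠ 0 ∨ cD c u1 u2 ≠ 0 := by
    by_contra! h
    obtain ⟨ha1, ha2⟩ := h
    obtain ⟨x, hx⟩ : ∃ x : AlgebraicClosure K,
        φ (cD c u0 u3) * x ^ 2 + φ (cE c u0 u1 u3) * x + φ (cD c u1 u3) = 0 := by
      have hne : φ (cD c u0 u3) ≠ 0 := by simpa using h03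
      obtain ⟨x, hx⟩ := IsAlgClosed.exists_root
        (Polynomial.C (φ (cD c u0 u3)) * Polynomial.X ^ 2
          + Polynomial.C (φ (cE c u0 u1 u3)) * Polynomial.X + Polynomial.C (φ (cD c u1 u3)))
        (by rw [Polynomial.degree_quadratic hne]; norm_num)
      exact ⟨x, by simpa [Polynomial.IsRoot] using hx⟩
    have hv := hsmb (x • clVec φ u0 + (1 : AlgebraicClosure K) • clVec φ u1)
      (by rw [cf_comb, mf, mf, mD, mD, f0, f1, h01, h10]; simp)
      (by
        apply hallb
        · rw [cD_left, mD, mD, mE, cE_swap23, cE_self, h01, h10, cD_self, f0]; simp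
        · rw [cD_left, mD, mD, mE, cE_swap12, cE_swap23, cE_self, h01, h10, cD_self, f1]; simp
        · rw [cD_left, mD, mD, mE, ha1, ha2, h02]; simp
        · rw [cD_left, mD, mD, mE, ← hx]; ring)
    have := hlib ![x, 1, 0, 0] (by rw [Fin.sum_univ_four, ← hv]; simp) 1
    simp at this
  -- the residual conic is smooth
  have hΔ : cE c u0 u1 u2 * cD c u2 u0 * cD c u2 u1 - cD c u1 u2 * cD c u2 u0 ^ 2
      - cf c u2 * cE c u0 u1 u2 ^ 2 ≠ 0 := by
    intro hΔ
    apply honly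
    obtain ⟨y, z, hz, e1, e2⟩ : ∃ y z : AlgebraicClosure K, z ≠ 0 ∧
        y * φ (cE c u0 u1 u2) + z * φ (cD c u2 u0) = 0 ∧
        y ^ 2 * φ (cD c u1 u2) + y * z * φ (cD c u2 u1) + z ^ 2 * φ (cf c u2) = 0 := by
      by_cases ha1 : cE c u0 u1 u2 = 0
      · have ha2 : cD c u1 u2 ≠ 0 := by
          rcases hred with h | h
          · exact absurd ha1 h
          · exact h
        have hc0 : cD c u2 u0 = 0 := by
          rw [ha1] at hΔ
          have : cD c u1 u2 * cD c u2 u0 ^ 2 = 0 := by linear_combination -hΔ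
          simpa [ha2] using this
        have hne : φ (cD c u1 u2) ≠ 0 := by simpa using ha2
        obtain ⟨x, hx⟩ := IsAlgClosed.exists_root
          (Polynomial.C (φ (cD c u1 u2)) * Polynomial.X ^ 2
            + Polynomial.C (φ (cD c u2 u1)) * Polynomial.X + Polynomial.C (φ (cf c u2)))
          (by rw [Polynomial.degree_quadratic hne]; norm_num)
        refine ⟨x, 1, one_ne_zero, by rw [ha1, hc0]; simp, ?_⟩
        have hx' : φ (cD c u1 u2) * x ^ 2 + φ (cD c u2 u1) * x + φ (cf c u2) = 0 := by
          simpa [Polynomial.IsRoot] using hx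
        linear_combination hx'
      · refine ⟨φ (cD c u2 u0), - φ (cE c u0 u1 u2), by simpa using ha1, by ring, ?_⟩
        have := congrArg φ hΔ
        simp only [map_sub, map_mul, map_pow, map_zero] at this
        linear_combination -this
    set v := y • clVec φ u1 + z • clVec φ u2 with hv
    have fv : cf cb v = 0 := by
      rw [hv, cf_comb, mf, mf, mD, mD, f1, map_zero]
      linear_combination z * e2
    have d0v : cD cb (clVec φ u0) v = 0 := by
      rw [hv, cD_right, mD, mD, h01, h02]; simp
    have dv0 : cD cb v (clVec φ u0) = 0 := by
      rw [hv, cD_left, mD, mD, mE, cE_swap23, cE_swap12, h10, map_zero]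
      linear_combination z * e1
    have hli2 : LinearIndependent (AlgebraicClosure K) ![clVec φ u0, v] := by
      rw [LinearIndependent.pair_iff]
      intro s t hst
      have h := hlib ![s, t * y, t * z, 0] (by
        rw [Fin.sum_univ_four, ← hst, hv]
        simp only [Matrix.cons_val]
        module)
      have q0 : s = 0 := h 0
      have q2 : t * z = 0 := h 2
      exact ⟨q0, by simpa [hz] using q2⟩
    refine ⟨Submodule.span _ {clVec φ u0, v}, ?_, isLine_span hli2, ?_, ?_⟩
    · intro heq
      have hvm : v ∈ Submodule.span (AlgebraicClosure K) (clVec φ '' (W : Set (Fin 4 → K))) := by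
        rw [← heq]; exact Submodule.subset_span (by simp)
      have hle : Submodule.span (AlgebraicClosure K) (clVec φ '' (W : Set (Fin 4 → K)))
          ≤ Submodule.span (AlgebraicClosure K) {clVec φ u0, clVec φ u1} := by
        rw [Submodule.span_le]
        rintro _ ⟨w, hw, rfl⟩
        obtain ⟨x, y, rfl⟩ := hWspan w hw
        show _ ∈ Submodule.span _ _
        rw [Submodule.mem_span_pair]
        exact ⟨φ x, φ y, by rw [clVec_add, clVec_smul, clVec_smul]⟩
      have := hle hvm
      rw [Submodule.mem_span_pair] at this
      obtain ⟨s, t, hst⟩ := this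
      have h := hlib ![s, t - y, -z, 0] (by
        rw [Fin.sum_univ_four]
        simp only [Matrix.cons_val]
        rw [← sub_eq_zero, hv] at hst
        rw [← hst]
        module)
      have q2 : -z = 0 := h 2
      exact hz (by simpa using q2)
    · rw [hclF]
      exact lineOnSurf_span cb (by rw [mf, f0, map_zero]) fv d0v dv0
    · exact hclP _ (Submodule.subset_span (by simp))
  have hlirs : ∀ r s : K, r • u0 + s • u1 ≠ 0 → (r ≠ 0 ∨ s ≠ 0) := by
    intro r s h
    by_contra! h'
    apply h
    rw [h'.1, h'.2]; simp
  have hsm : ∀ r s : K, (r ≠ 0 ∨ s ≠ 0) → cD c (r • u0 + s • u1) u2 = 0 →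
      cD c (r • u0 + s • u1) u3 ≠ 0 := by
    intro r s hrs h2 h3
    have hmem : r • u0 + s • u1 ∈ W := W.add_mem (W.smul_mem _ hPW') (W.smul_mem _ hu1)
    obtain ⟨w, hw⟩ := hsmK (r • u0 + s • u1) (by
      intro h
      rw [Fintype.linearIndependent_iff] at hli
      have h := hli ![r, s, 0, 0] (by rw [Fin.sum_univ_four, ← h]; simp)
      rcases hrs with h' | h'
      · exact h' (h 0)
      · exact h' (h 1)) (hWf _ hmem)
    apply hw
    obtain ⟨x, y, z, t, rfl⟩ := hspan w
    rw [cD_add_right, cD_add_right, cD_add_right, cD_smul_right, cD_smul_right, cD_smul_right,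
      cD_smul_right, h2, h3, hWD _ hmem _ hPW', hWD _ hmem _ hu1]
    ring
  -- conclusion
  rintro A ⟨hA1, hA2⟩
  have fA : cf c A.rep = 0 := by rw [← eval_cpoly]; exact hA1
  have tA : cD c u0 A.rep = 0 := by rw [← hte]; exact hA2
  have fin : InSp c {P} A.rep := by
    have hAne := A.rep_nonzero
    obtain ⟨x, y, z, w, hA⟩ := hspan A.rep
    have hw : w = 0 := by
      rw [hA, cD_add_right, cD_add_right, cD_add_right, cD_smul_right, cD_smul_right,
        cD_smul_right, cD_smul_right, h01, h02, cD_self, f0] at tA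
      simpa [h03] using tA
    rw [hw, zero_smul, add_zero] at hA
    by_cases hz : z = 0
    · rw [hz, zero_smul, add_zero] at hA
      rw [hA] at hAne ⊢
      exact core hK c {P} hli f0 f1 h01 h10 h02 h03 hBP hsm hred hΔ x y (hlirs x y hAne)
    · rw [hA] at fA ⊢
      refine off_line hBP ?_ f0 f1 h01 h10 h02 hΔ x y z hz fA
      rw [Fintype.linearIndependent_iff] at hli ⊢
      intro g hg
      have h := hli ![g 0, g 1, g 2, 0] (by
        rw [Fin.sum_univ_three] at hg
        rw [Fin.sum_univ_four, ← hg]; simp)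
      intro i
      fin_cases i
      · exact h 0
      · exact h 1
      · exact h 2
  obtain ⟨h0, hs⟩ := fin
  rw [Projectivization.mk_rep] at hs
  exact hs
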